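/- Let H : ℝ → ℝ be a smooth, nowhere-vanishing function of Z, and for α ∈ ℝ define the 2×2 matrix-valued functions B̂(Z,α) = [[−1, α/H],[α/H, 1]] and Ĉ(Z,α) = [[4αH, H·H'' + (H')² − 2H·H' − 4α²],[H·H'' + (H')² + 2H·H' − 4α², −4αH]], where ' denotes d/dZ. Then the zero-curvature condition ∂_α B̂ − ∂_Z(3Ĉ) + B̂·(3Ĉ) − (3Ĉ)·B̂ = 0 holds for all (Z,α) ∈ ℝ² if and only if H satisfies the reduced ODE (H³(H'' − H))' − H/3 = 0 on ℝ. -/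

import Mathlib

noncomputable section

/-- Entrywise partial derivative of a matrix-valued function w.r.t. the first argument. -/
def dmat1 (A : ℝ → ℝ → Matrix (Fin 2) (Fin 2) ℝ) : ℝ → ℝ → Matrix (Fin 2) (Fin 2) ℝ :=
  fun a b => Matrix.of fun i j => deriv (fun a' => A a' b i j) a

/-- Entrywise partial derivative of a matrix-valued function w.r.t. the second argument. -/
def dmat2 (A : ℝ → ℝ → Matrix (Fin 2) (Fin 2) ℝ) : ℝ → ℝ → Matrix (Fin 2) (Fin 2) ℝ :=
  fun a b => Matrix.of fun i j => deriv (fun b' => A a b' i j) b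

/-- The matrix `B̂` of the reduced RmKdV Lax pair, as a function of `(Z, α)`. -/
def BhatMat (H : ℝ → ℝ) : ℝ → ℝ → Matrix (Fin 2) (Fin 2) ℝ :=
  fun Z α => !![-1, α / H Z; α / H Z, 1]

/-- The matrix `Ĉ` of the reduced RmKdV Lax pair, as a function of `(Z, α)`. -/
def ChatMat (H : ℝ → ℝ) : ℝ → ℝ → Matrix (Fin 2) (Fin 2) ℝ :=
  fun Z α =>
    !![4 * α * H Z,
        H Z * deriv (deriv H) Z + (deriv H Z) ^ 2 - 2 * H Z * deriv H Z - 4 * α ^ 2;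
      H Z * deriv (deriv H) Z + (deriv H Z) ^ 2 + 2 * H Z * deriv H Z - 4 * α ^ 2,
        -(4 * α * H Z)]

/-! In terms of `P = H H'` and the matrices `σ = !![0, 1; 1, 0]`, `τ = !![1, 0; 0, -1]`,
`ε = !![0, 1; -1, 0]`, the Lax pair reads `B̂ = -τ + (α / H) σ` and
`Ĉ = 4αH τ + (P' - 4α²) σ - 2P ε`. In `[B̂, Ĉ] - ∂_Z Ĉ` everything cancels except `(4P - P'') σ`,
so the curvature `∂_α B̂ - 3 ∂_Z Ĉ + 3 [B̂, Ĉ]` is `(1 / H + 3 (4P - P'')) σ`, independent of `α`.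
On the other hand `H² (P'' - 4P) = (H³ (H'' - H))'`, so `-H² / 3` times this coefficient is the
left-hand side of the reduced ODE. -/

section Derivatives

variable {𝕜 : Type*} [NontriviallyNormedField 𝕜] {f : 𝕜 → 𝕜} {z : 𝕜}

theorem hasDerivAt_mul_deriv_deriv_add_deriv_sq (hf : DifferentiableAt 𝕜 f z)
    (hf' : DifferentiableAt 𝕜 (deriv f) z) (hf'' : DifferentiableAt 𝕜 (deriv (deriv f)) z) :
    HasDerivAt (fun w ↦ f w * deriv (deriv f) w + deriv f w ^ 2)
      (3 * deriv f z * deriv (deriv f) z + f z * deriv (deriv (deriv f)) z) z :=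
  ((hf.hasDerivAt.fun_mul hf''.hasDerivAt).fun_add (hf'.hasDerivAt.fun_pow 2)).congr_deriv <| by
    norm_num
    ring

theorem hasDerivAt_two_mul_mul_deriv (hf : DifferentiableAt 𝕜 f z)
    (hf' : DifferentiableAt 𝕜 (deriv f) z) :
    HasDerivAt (fun w ↦ 2 * f w * deriv f w)
      (2 * (f z * deriv (deriv f) z + deriv f z ^ 2)) z :=
  ((hf.hasDerivAt.const_mul 2).fun_mul hf'.hasDerivAt).congr_deriv <| by ring

theorem deriv_cube_mul_deriv_deriv_sub_self (hf : DifferentiableAt 𝕜 f z)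
    (hf'' : DifferentiableAt 𝕜 (deriv (deriv f)) z) :
    deriv (fun w ↦ f w ^ 3 * (deriv (deriv f) w - f w)) z =
      f z ^ 2 * (3 * deriv f z * deriv (deriv f) z + f z * deriv (deriv (deriv f)) z
        - 4 * (f z * deriv f z)) := by
  refine (((hf.hasDerivAt.fun_pow 3).fun_mul
    (hf''.hasDerivAt.fun_sub hf.hasDerivAt)).congr_deriv ?_).deriv
  norm_num
  ring

end Derivatives

section Curvature

variable {A B C : ℝ → ℝ → Matrix (Fin 2) (Fin 2) ℝ} {A' : Matrix (Fin 2) (Fin 2) ℝ} {a b : ℝ}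

theorem dmat1_eq_of_hasDerivAt (h : ∀ i j, HasDerivAt (fun a' ↦ A a' b i j) (A' i j) a) :
    dmat1 A a b = A' :=
  Matrix.ext fun i j ↦ (h i j).deriv

theorem dmat2_eq_of_hasDerivAt (h : ∀ i j, HasDerivAt (fun b' ↦ A a b' i j) (A' i j) b) :
    dmat2 A a b = A' :=
  Matrix.ext fun i j ↦ (h i j).deriv

theorem dmat1_const_smul (c : ℝ) : dmat1 (fun a b ↦ c • A a b) a b = c • dmat1 A a b :=
  Matrix.ext fun _ _ ↦ deriv_const_mul_field c

/-- The curvature `∂_b B - ∂_a C + [B, C]` of the linear system `Ω_a = B Ω`, `Ω_b = C Ω`, whose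
vanishing is the compatibility condition of the system. -/
def laxCurvature (B C : ℝ → ℝ → Matrix (Fin 2) (Fin 2) ℝ) (a b : ℝ) :
    Matrix (Fin 2) (Fin 2) ℝ :=
  dmat2 B a b - dmat1 C a b + B a b * C a b - C a b * B a b

theorem laxCurvature_const_smul_right (c : ℝ) :
    laxCurvature B (fun a b ↦ c • C a b) a b =
      dmat2 B a b + c • (⁅B a b, C a b⁆ - dmat1 C a b) := by
  rw [laxCurvature, dmat1_const_smul, Ring.lie_def, mul_smul_comm, smul_mul_assoc]
  module

end Curvature

section LaxPair

variable {H : ℝ → ℝ} {Z : ℝ}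

theorem dmat2_BhatMat (H : ℝ → ℝ) (Z α : ℝ) :
    dmat2 (BhatMat H) Z α = (1 / H Z) • !![0, 1; 1, 0] := by
  have off_diagonal : HasDerivAt (fun α ↦ α / H Z) (1 / H Z) α := (hasDerivAt_id' α).div_const (H Z)
  refine dmat2_eq_of_hasDerivAt fun i j ↦ ?_
  fin_cases i <;> fin_cases j
  · simpa [BhatMat] using hasDerivAt_const α (-1 : ℝ)
  · simpa [BhatMat] using off_diagonal
  · simpa [BhatMat] using off_diagonal
  · simpa [BhatMat] using hasDerivAt_const α (1 : ℝ)

theorem dmat1_ChatMat (hH : DifferentiableAt ℝ H Z) (hH' : DifferentiableAt ℝ (deriv H) Z)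
    (hH'' : DifferentiableAt ℝ (deriv (deriv H)) Z) (α : ℝ) :
    dmat1 (ChatMat H) Z α =
      !![4 * α * deriv H Z,
          3 * deriv H Z * deriv (deriv H) Z + H Z * deriv (deriv (deriv H)) Z
            - 2 * (H Z * deriv (deriv H) Z + deriv H Z ^ 2);
        3 * deriv H Z * deriv (deriv H) Z + H Z * deriv (deriv (deriv H)) Z
            + 2 * (H Z * deriv (deriv H) Z + deriv H Z ^ 2),
          -(4 * α * deriv H Z)] := by
  have diagonal := hH.hasDerivAt.const_mul (4 * α)
  have symmetric_part := hasDerivAt_mul_deriv_deriv_add_deriv_sq hH hH' hH''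
  have skew_part := hasDerivAt_two_mul_mul_deriv hH hH'
  refine dmat1_eq_of_hasDerivAt fun i j ↦ ?_
  fin_cases i <;> fin_cases j
  · exact diagonal
  · exact (symmetric_part.fun_sub skew_part).sub_const _
  · exact (symmetric_part.fun_add skew_part).sub_const _
  · exact diagonal.fun_neg

theorem lie_BhatMat_ChatMat (hZ : H Z ≠ 0) (α : ℝ) :
    ⁅BhatMat H Z α, ChatMat H Z α⁆ =
      !![4 * α * deriv H Z,
          4 * (H Z * deriv H Z) - 2 * (H Z * deriv (deriv H) Z + deriv H Z ^ 2);
        4 * (H Z * deriv H Z) + 2 * (H Z * deriv (deriv H) Z + deriv H Z ^ 2),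
          -(4 * α * deriv H Z)] := by
  rw [Ring.lie_def, BhatMat, ChatMat]
  ext i j
  fin_cases i <;> fin_cases j <;> simp <;> field_simp <;> ring

theorem lie_BhatMat_ChatMat_sub_dmat1_ChatMat (hH : DifferentiableAt ℝ H Z)
    (hH' : DifferentiableAt ℝ (deriv H) Z) (hH'' : DifferentiableAt ℝ (deriv (deriv H)) Z)
    (hZ : H Z ≠ 0) (α : ℝ) :
    ⁅BhatMat H Z α, ChatMat H Z α⁆ - dmat1 (ChatMat H) Z α =
      (4 * (H Z * deriv H Z)
        - (3 * deriv H Z * deriv (deriv H) Z + H Z * deriv (deriv (deriv H)) Z))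
        • !![0, 1; 1, 0] := by
  rw [lie_BhatMat_ChatMat hZ, dmat1_ChatMat hH hH' hH'']
  ext i j
  fin_cases i <;> fin_cases j <;> simp

theorem laxCurvature_BhatMat_ChatMat (hH : DifferentiableAt ℝ H Z)
    (hH' : DifferentiableAt ℝ (deriv H) Z) (hH'' : DifferentiableAt ℝ (deriv (deriv H)) Z)
    (hZ : H Z ≠ 0) (α : ℝ) :
    laxCurvature (BhatMat H) (fun Z α ↦ (3 : ℝ) • ChatMat H Z α) Z α =
      (-(3 / H Z ^ 2) *
        (deriv (fun Z ↦ H Z ^ 3 * (deriv (deriv H) Z - H Z)) Z - H Z / 3)) •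
          !![0, 1; 1, 0] := by
  rw [laxCurvature_const_smul_right, dmat2_BhatMat,
    lie_BhatMat_ChatMat_sub_dmat1_ChatMat hH hH' hH'' hZ, smul_smul, ← add_smul,
    deriv_cube_mul_deriv_deriv_sub_self hH hH'']
  congr 1
  field

end LaxPair

theorem reduced_RmKdV_zero_curvature_iff_general {H : ℝ → ℝ} {Z : ℝ}
    (hH : DifferentiableAt ℝ H Z) (hH' : DifferentiableAt ℝ (deriv H) Z)
    (hH'' : DifferentiableAt ℝ (deriv (deriv H)) Z) (hZ : H Z ≠ 0) (α : ℝ) :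
    laxCurvature (BhatMat H) (fun Z α ↦ (3 : ℝ) • ChatMat H Z α) Z α = 0 ↔
      deriv (fun Z ↦ H Z ^ 3 * (deriv (deriv H) Z - H Z)) Z - H Z / 3 = 0 := by
  have off_diagonal_ne_zero : (!![0, 1; 1, 0] : Matrix (Fin 2) (Fin 2) ℝ) ≠ 0 :=
    fun h ↦ one_ne_zero (congrFun₂ h 0 1)
  have factor_ne_zero : -(3 / H Z ^ 2) ≠ 0 :=
    neg_ne_zero.mpr (div_ne_zero three_ne_zero (pow_ne_zero 2 hZ))
  rw [laxCurvature_BhatMat_ChatMat hH hH' hH'' hZ, smul_eq_zero_iff_left off_diagonal_ne_zero,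
    mul_eq_zero_iff_left factor_ne_zero]

/-- the zero-curvature condition `∂_α B̂ − ∂_Z(3Ĉ) + [B̂, 3Ĉ] = 0` of the
reduced Lax pair holds for all `(Z, α)` iff `H` solves the reduced ODE
`(H³(H'' − H))' − H/3 = 0`. -/
theorem reduced_RmKdV_zero_curvature_iff (H : ℝ → ℝ)
    (hH : ContDiff ℝ (⊤ : ℕ∞) H) (hne : ∀ Z, H Z ≠ 0) :
    (∀ Z α,
      dmat2 (BhatMat H) Z α - dmat1 (fun Z α => (3 : ℝ) • ChatMat H Z α) Z α
        + BhatMat H Z α * ((3 : ℝ) • ChatMat H Z α)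
        - ((3 : ℝ) • ChatMat H Z α) * BhatMat H Z α = 0)
    ↔ (∀ Z, deriv (fun Z => (H Z) ^ 3 * (deriv (deriv H) Z - H Z)) Z - H Z / 3 = 0) := by
  have diff (n : ℕ) : Differentiable ℝ (deriv^[n] H) :=
    (hH.iterate_deriv n).differentiable (by simp)
  exact forall_congr' fun Z ↦ (forall_congr' (reduced_RmKdV_zero_curvature_iff_general
    (diff 0 Z) (diff 1 Z) (diff 2 Z) (hne Z))).trans (forall_const ℝ)
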